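/- Let δ_Q : V → V be the unique P-linear map defined as follows: on the first summand R′ ⊕ 0, basis words of the form ξ₁ · ξ_i · w with 1 ≤ i ≤ h−3 are sent to (ξ_{i+1} · w, 0), basis words of the form ξ₁ · ξ_{h−2} · w are sent to (0, w), and all other words are sent to 0; on the second summand 0 ⊕ R′, δ_Q is zero. Let π : V → V be the P-linear map π(f, g) = (π₀ f, 0), where π₀ projects R′ onto P·1 ⊕ P·ξ₁, killing all other words. Then δ_Q ∘ D + D ∘ δ_Q = id_V − π. -/

import Mathlib

/-!
Every element of `R′` is a `P`-combination of words, so both sides are compared on `(w, 0)` and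
`(0, w)` for words `w`. Write `S n = Σ_{j+k=n} ξ_j ξ_k`; then `d ξ_i = S i` and `μ = S (h-1)`, which
makes `ξ_{h-1}` behave like one more generator. Two facts about `δ_Q` carry the proof.
* `delta_quad_mul`: `δ_Q` kills words not starting with `ξ₁`, so it sees only the summand
  `ξ₁ ξ_{n-1}` of `S n`, and `δ_Q (S n · f) = δ_Q (ξ₁ ξ_{n-1} f)`. This is all that is needed on
  words not starting with `ξ₁` and on the second summand of `V`.
* `delta_mul_quad`: shifting the first index sends `ξ₁ · S n` to all of `S (n+1)` except its
  summand `ξ₁ ξ_n`, so `δ_Q (ξ₁ S n f) + ξ₁ ξ_n f = S (n+1) f`. On a word `ξ₁ ξ_n w` the missing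
  summand is exactly the identity term of the homotopy formula; the terms involving `d w` cancel.
-/

/- `R' k h = FreeAlgebra (k[τ]) (Fin (h-2))` models the free algebra over
`P = k[τ]` on noncommuting generators `ξ₁, …, ξ_{h−2}`; the generator of index
`a : Fin (h-2)` represents `ξ_{a+1}`. -/

/-- The free algebra `R′` over `P = k[τ]` on `ξ₁, …, ξ_{h−2}`. -/
abbrev Ralg (k : Type*) [Field k] (h : ℕ) : Type _ :=
  FreeAlgebra (Polynomial k) (Fin (h - 2))

/-- The element `d(ξ_{a+1}) = Σ_{j+k=a+1, j,k≥1} ξ_j ξ_k` of `R′`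
(with `ξ_j = ι ⟨j-1⟩`). -/
noncomputable def dgen (k : Type*) [Field k] (h : ℕ) (a : Fin (h - 2)) : Ralg k h :=
  ∑ p ∈ Finset.univ.filter
      (fun p : Fin (h - 2) × Fin (h - 2) => p.1.val + p.2.val + 2 = a.val + 1),
    FreeAlgebra.ι (Polynomial k) p.1 * FreeAlgebra.ι (Polynomial k) p.2

/-- The basis word of `R′` corresponding to a list of generator indices. -/
noncomputable def word (k : Type*) [Field k] (h : ℕ) (w : List (Fin (h - 2))) :
    Ralg k h :=
  (w.map (FreeAlgebra.ι (Polynomial k))).prod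

/-- The prescribed value of the differential `d` on a basis word of `R′`. -/
noncomputable def dWord (k : Type*) [Field k] (h : ℕ) :
    List (Fin (h - 2)) → Ralg k h
  | [] => 0
  | a :: w => dgen k h a * word k h w - FreeAlgebra.ι (Polynomial k) a * dWord k h w

/-- The element `μ = Σ_{j+k=h−1, j,k≥1} ξ_j ξ_k` of `R′`. -/
noncomputable def muElt (k : Type*) [Field k] (h : ℕ) : Ralg k h :=
  ∑ p ∈ Finset.univ.filter
      (fun p : Fin (h - 2) × Fin (h - 2) => p.1.val + p.2.val + 2 = h - 1),
    FreeAlgebra.ι (Polynomial k) p.1 * FreeAlgebra.ι (Polynomial k) p.2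

/-- The quadratic element `Σ ξ_j ξ_k` over `j + k = n`, `j, k ≥ 1`; both `dgen` and `muElt` are
instances of it by definition. -/
noncomputable def quad (k : Type*) [Field k] (h n : ℕ) : Ralg k h :=
  ∑ p ∈ Finset.univ.filter
      (fun p : Fin (h - 2) × Fin (h - 2) => p.1.val + p.2.val + 2 = n),
    FreeAlgebra.ι (Polynomial k) p.1 * FreeAlgebra.ι (Polynomial k) p.2

section

variable {k : Type*} [Field k] {h : ℕ}

lemma dgen_eq_quad (a : Fin (h - 2)) : dgen k h a = quad k h (a.val + 1) := rfl

lemma muElt_eq_quad : muElt k h = quad k h (h - 1) := rfl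

lemma word_nil : word k h [] = 1 := by simp [word]

lemma word_cons (a : Fin (h - 2)) (w : List (Fin (h - 2))) :
    word k h (a :: w) = FreeAlgebra.ι (Polynomial k) a * word k h w := by simp [word]

lemma word_append (v w : List (Fin (h - 2))) :
    word k h (v ++ w) = word k h v * word k h w := by simp [word]

lemma quad_one : quad k h 1 = 0 := by
  unfold quad
  rw [Finset.filter_false_of_mem (by intro p _; omega), Finset.sum_empty]

lemma span_word : Submodule.span (Polynomial k) (Set.range (word k h)) = ⊤ := by
  rw [eq_top_iff]
  rintro x -
  induction x using FreeAlgebra.induction with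
  | grade0 r =>
    rw [Algebra.algebraMap_eq_smul_one, ← word_nil]
    exact Submodule.smul_mem _ _ (Submodule.subset_span ⟨_, rfl⟩)
  | grade1 a => exact Submodule.subset_span ⟨[a], by simp [word]⟩
  | mul x y hx hy =>
    have hxy := Submodule.mul_mem_mul hx hy
    rw [Submodule.span_mul_span] at hxy
    refine Submodule.span_mono ?_ hxy
    rintro _ ⟨_, ⟨v, rfl⟩, _, ⟨w, rfl⟩, rfl⟩
    exact ⟨v ++ w, word_append v w⟩
  | add x y hx hy => exact Submodule.add_mem _ hx hy

lemma ext_word {M : Type*} [AddCommMonoid M] [Module (Polynomial k) M]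
    {F G : Ralg k h →ₗ[Polynomial k] M} (H : ∀ w, F (word k h w) = G (word k h w)) : F = G :=
  LinearMap.ext_on_range span_word H

/-- A map killing every word that does not start with `ξ₁` sees only the summand `ξ₁ ξ_{m+1}`
of `quad k h (m + 2)`, whose index pair is `(0, m)`. -/
lemma delta_quad_mul {M : Type*} [AddCommMonoid M] [Module (Polynomial k) M]
    (E : Ralg k h →ₗ[Polynomial k] M) (h0 : 0 < h - 2)
    (hE : ∀ (a : Fin (h - 2)) (f : Ralg k h), a ≠ ⟨0, h0⟩ →
      E (FreeAlgebra.ι (Polynomial k) a * f) = 0)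
    (m : ℕ) (hm : m < h - 2) (f : Ralg k h) :
    E (quad k h (m + 2) * f) =
      E (FreeAlgebra.ι (Polynomial k) ⟨0, h0⟩ * (FreeAlgebra.ι (Polynomial k) ⟨m, hm⟩ * f)) := by
  unfold quad
  rw [Finset.sum_mul, map_sum]
  rw [Finset.sum_eq_single (⟨0, h0⟩, ⟨m, hm⟩)]
  · rw [mul_assoc]
  · rintro ⟨a, b⟩ hp hne
    rw [mul_assoc]
    refine hE _ _ ?_
    rintro rfl
    apply hne
    simp only [Finset.mem_filter, Finset.mem_univ, true_and] at hp
    ext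
    · rfl
    · simp; omega
  · intro hp
    simp at hp

/-- If `E (ξ₁ ξ_i f) = G (ξ_{i+1} f)` for `i ≤ h - 3`, then `E` takes `ξ₁ · quad (m + 1)` to the image
under `G` of `quad (m + 2)` without its summand `ξ₁ ξ_{m+1}`. -/
lemma delta_mul_quad {M : Type*} [AddCommMonoid M] [Module (Polynomial k) M]
    (E G : Ralg k h →ₗ[Polynomial k] M) (h0 : 0 < h - 2)
    (hE : ∀ (a : Fin (h - 2)) (f : Ralg k h) (ha : a.val + 1 < h - 2),
      E (FreeAlgebra.ι (Polynomial k) ⟨0, h0⟩ * (FreeAlgebra.ι (Polynomial k) a * f)) =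
        G (FreeAlgebra.ι (Polynomial k) ⟨a.val + 1, ha⟩ * f))
    (m : ℕ) (hm : m < h - 2) (f : Ralg k h) :
    G (FreeAlgebra.ι (Polynomial k) ⟨0, h0⟩ * (FreeAlgebra.ι (Polynomial k) ⟨m, hm⟩ * f)) +
      E (FreeAlgebra.ι (Polynomial k) ⟨0, h0⟩ * (quad k h (m + 1) * f)) =
      G (quad k h (m + 2) * f) := by
  unfold quad
  simp only [Finset.sum_mul, Finset.mul_sum, map_sum, mul_assoc]
  rw [← Finset.add_sum_erase (Finset.univ.filter
      (fun p : Fin (h - 2) × Fin (h - 2) => p.1.val + p.2.val + 2 = m + 2)) _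
      (a := (⟨0, h0⟩, ⟨m, hm⟩)) (by simp)]
  congr 1
  refine Finset.sum_bij'
    (fun p hp => (⟨p.1.val + 1, by simp at hp; omega⟩, p.2))
    (fun p _ => (⟨p.1.val - 1, by omega⟩, p.2)) ?_ ?_ ?_ ?_ ?_
  · rintro ⟨a, b⟩ hp
    simp at hp ⊢
    omega
  · rintro ⟨⟨a, ha⟩, ⟨b, hb⟩⟩ hp
    simp at hp ⊢
    omega
  · rintro ⟨a, b⟩ hp
    simp
  · rintro ⟨⟨a, ha⟩, ⟨b, hb⟩⟩ hp
    simp at hp ⊢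
    omega
  · rintro ⟨a, b⟩ hp
    exact hE _ _ _

end

/-- with `V = R′ ⊕ R′` and `D(f, g) = (d f + μ g, −d g)`, the map
`δ_Q` (sending, on the first summand, `ξ₁ ξ_i w ↦ ξ_{i+1} w` for `1 ≤ i ≤ h−3`,
`ξ₁ ξ_{h−2} w ↦ (0, w)`, and all other words to `0`, and vanishing on the second
summand) and the projection `π(f, g) = (π₀ f, 0)` onto `P·1 ⊕ P·ξ₁` satisfy
`δ_Q ∘ D + D ∘ δ_Q = id − π`.  (Generator of index `a` represents `ξ_{a+1}`,
so `ξ₁` is the generator of index `0` and `ξ_{h−2}` the generator of index `h−3`.) -/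
theorem contracting_homotopy_Q (k : Type*) [Field k] (h : ℕ) (hh : 3 ≤ h)
    (d : Ralg k h →ₗ[Polynomial k] Ralg k h)
    (hd : ∀ w : List (Fin (h - 2)), d (word k h w) = dWord k h w)
    (D δ π : Ralg k h × Ralg k h →ₗ[Polynomial k] Ralg k h × Ralg k h)
    (hD : ∀ f g : Ralg k h, D (f, g) = (d f + muElt k h * g, -d g))
    (hδ₁ : ∀ (a : Fin (h - 2)) (w : List (Fin (h - 2))) (ha : a.val + 1 < h - 2),
      δ (word k h ((⟨0, by omega⟩ : Fin (h - 2)) :: a :: w), 0) =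
        (word k h ((⟨a.val + 1, ha⟩ : Fin (h - 2)) :: w), 0))
    (hδ₂ : ∀ w : List (Fin (h - 2)),
      δ (word k h ((⟨0, by omega⟩ : Fin (h - 2)) :: (⟨h - 3, by omega⟩ : Fin (h - 2)) :: w), 0) =
        (0, word k h w))
    (hδ₃ : δ (word k h [], 0) = 0)
    (hδ₄ : ∀ a : Fin (h - 2), δ (word k h [a], 0) = 0)
    (hδ₅ : ∀ (a : Fin (h - 2)) (w : List (Fin (h - 2))),
      a ≠ (⟨0, by omega⟩ : Fin (h - 2)) → δ (word k h (a :: w), 0) = 0)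
    (hδ₆ : ∀ w : List (Fin (h - 2)), δ (0, word k h w) = 0)
    (hπ₁ : π (word k h [], 0) = (word k h [], 0))
    (hπ₂ : π (word k h [(⟨0, by omega⟩ : Fin (h - 2))], 0) =
      (word k h [(⟨0, by omega⟩ : Fin (h - 2))], 0))
    (hπ₃ : ∀ w : List (Fin (h - 2)), w ≠ [] → w ≠ [(⟨0, by omega⟩ : Fin (h - 2))] →
      π (word k h w, 0) = 0)
    (hπ₄ : ∀ w : List (Fin (h - 2)), π (0, word k h w) = 0) :
    δ ∘ₗ D + D ∘ₗ δ = LinearMap.id - π := by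
  have h0 : 0 < h - 2 := by omega
  have h3 : h - 3 < h - 2 := by omega
  -- The defining formulas extend by linearity from words to arbitrary elements of `R′`.
  set X : Fin (h - 2) → Ralg k h := FreeAlgebra.ι (Polynomial k) with hX
  set inl := LinearMap.inl (Polynomial k) (Ralg k h) (Ralg k h) with hinl
  set inr := LinearMap.inr (Polynomial k) (Ralg k h) (Ralg k h) with hinr
  set E := δ ∘ₗ inl with hEdef
  have hl (f : Ralg k h) : (f, 0) = inl f := rfl
  have hr (f : Ralg k h) : (0, f) = inr f := rfl
  have hE (f) : E f = δ (f, 0) := rfl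
  have hd' (a : Fin (h - 2)) (f : Ralg k h) :
      d (X a * f) = quad k h (a.val + 1) * f - X a * d f := by
    have := ext_word (F := d ∘ₗ LinearMap.mulLeft _ (X a))
      (G := LinearMap.mulLeft _ (quad k h (a.val + 1)) - LinearMap.mulLeft _ (X a) ∘ₗ d) (by
        intro w
        simp [hX, ← word_cons, hd, dWord, dgen_eq_quad])
    exact LinearMap.congr_fun this f
  have hd1 : d 1 = 0 := by rw [← word_nil, hd, dWord]
  have E1 (a : Fin (h - 2)) (f : Ralg k h) (ha : a.val + 1 < h - 2) :
      E (X ⟨0, h0⟩ * (X a * f)) = inl (X ⟨a.val + 1, ha⟩ * f) := by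
    have := ext_word (F := E ∘ₗ LinearMap.mulLeft _ (X ⟨0, h0⟩) ∘ₗ LinearMap.mulLeft _ (X a))
      (G := inl ∘ₗ LinearMap.mulLeft _ (X ⟨a.val + 1, ha⟩)) (by
        intro w
        have := hδ₁ a w ha
        rw [word_cons, word_cons, word_cons] at this
        exact this)
    exact LinearMap.congr_fun this f
  have E2 (f : Ralg k h) : E (X ⟨0, h0⟩ * (X ⟨h - 3, h3⟩ * f)) = inr f := by
    have := ext_word
      (F := E ∘ₗ LinearMap.mulLeft _ (X ⟨0, h0⟩) ∘ₗ LinearMap.mulLeft _ (X ⟨h - 3, h3⟩))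
      (G := inr) (by
        intro w
        have := hδ₂ w
        rw [word_cons, word_cons] at this
        exact this)
    exact LinearMap.congr_fun this f
  have E5 (a : Fin (h - 2)) (f : Ralg k h) (ha : a ≠ ⟨0, h0⟩) : E (X a * f) = 0 := by
    have := ext_word (F := E ∘ₗ LinearMap.mulLeft _ (X a)) (G := 0) (by
        intro w
        have := hδ₅ a w ha
        rw [word_cons] at this
        exact this)
    exact LinearMap.congr_fun this f
  have E6 (f : Ralg k h) : δ (0, f) = 0 := by
    have := ext_word (F := δ ∘ₗ inr) (G := 0) (by
        exact hδ₆)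
    exact LinearMap.congr_fun this f
  have hDl (f : Ralg k h) : D (f, 0) = (d f, 0) := by simp [hD]
  apply LinearMap.prod_ext
  · apply ext_word
    intro w
    change δ (D (word k h w, 0)) + D (δ (word k h w, 0)) = (word k h w, 0) - π (word k h w, 0)
    rw [hDl]
    rcases w with _ | ⟨a, w⟩
    · rw [hδ₃, hπ₁, word_nil, hd1]
      simp [E6]
    by_cases ha : a = ⟨0, h0⟩
    · subst ha
      rcases w with _ | ⟨b, w⟩
      · rw [hδ₄, hπ₂, word_cons, word_nil, hd', hd1, quad_one]
        simp [E6]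
      rw [hπ₃ _ (by simp) (by simp), sub_zero, word_cons, word_cons, ← hX, hd', hd', ← hE, ← hE,
        quad_one, zero_mul, zero_sub, mul_sub, neg_sub, map_sub]
      have hq := delta_mul_quad E inl h0 E1 b.val b.isLt (word k h w)
      rw [← hX] at hq
      by_cases hb : b.val + 1 < h - 2
      · rw [E1 _ _ hb, E1 _ _ hb]
        rw [← hl (_ * word k h w), hDl, hd', hl, hl, map_sub, ← hq]
        abel
      · obtain rfl : b = ⟨h - 3, h3⟩ := by ext; simp; omega
        rw [E2, E2]
        rw [← hr (word k h w), hD, map_zero, zero_add, muElt_eq_quad]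
        -- `ξ_{h-2}` has index `h - 3`, and `μ` is the quadratic element of weight `(h - 3) + 2`.
        have hn : h - 3 + 2 = h - 1 := by omega
        simp only [hn] at hq
        have hs : (quad k h (h - 1) * word k h w, -d (word k h w)) =
            inl (quad k h (h - 1) * word k h w) - inr (d (word k h w)) := by
          simp [hinl, hinr]
        rw [hs, hl, ← hq]
        abel
    · have hpos : a.val ≠ 0 := fun h' => ha (Fin.ext h')
      obtain ⟨m, hm⟩ := Nat.exists_eq_succ_of_ne_zero hpos
      have hml : m < h - 2 := by omega
      rw [hδ₅ _ _ ha, hπ₃ _ (by simp) (by simp [ha]), map_zero, sub_zero, add_zero, word_cons,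
        ← hX, hd', ← hE, map_sub, E5 _ _ ha, sub_zero, hm,
        delta_quad_mul E h0 E5 m hml, ← hX, E1 ⟨m, hml⟩ _ (by simp; omega)]
      have hae : ⟨m + 1, by omega⟩ = a := Fin.ext hm.symm
      simp only [hae, hl, hX]
  · apply ext_word
    intro w
    change δ (D (0, word k h w)) + D (δ (0, word k h w)) = (0, word k h w) - π (0, word k h w)
    rw [E6, hπ₄, hD, map_zero, map_zero, zero_add, add_zero, sub_zero, muElt_eq_quad]
    have hs : (quad k h (h - 1) * word k h w, -d (word k h w)) =
        (quad k h (h - 1) * word k h w, 0) + (0, -d (word k h w)) := by simp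
    have hn : h - 1 = h - 3 + 2 := by omega
    rw [hs, map_add, E6, add_zero, ← hE, hn, delta_quad_mul E h0 E5 (h - 3) h3, ← hX, E2]
    rfl
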